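/- Let n and k be positive integers with k ≤ n, let M > 0, and let C = {z ∈ ℝ^n : card(z) ≤ k and ‖z‖_∞ ≤ M}. Given z ∈ ℝ^n, let I ⊆ {1,…,n} be a set of k indices of the k largest values of |z_i|, i.e., |z_i| ≥ |z_j| for all i ∈ I and j ∉ I. Define p ∈ ℝ^n by p_i = M if i ∈ I and z_i > M; p_i = −M if i ∈ I and z_i < −M; p_i = z_i if i ∈ I and |z_i| ≤ M; and p_i = 0 if i ∉ I. Then p ∈ C and for every x ∈ C, ‖p − z‖_2 ≤ ‖x − z‖_2; that is, p is a Euclidean projection of z onto C. -/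

import Mathlib

/-!
The squared distance to `z` is a sum over the coordinates. Coordinate `i` costs at least `z i ^ 2`
if it is set to zero, and at least `(clip M (z i) - z i) ^ 2` otherwise. The saving from keeping it,
`z i ^ 2 - (clip M (z i) - z i) ^ 2`, is nonnegative and monotone in `|z i|`, so among all supports
of size at most `k` the total saving is largest for the `k` entries of largest magnitude.
-/

open Finset

section Exchange

variable {ι N : Type*}

lemma sum_le_sum_of_card_le_of_forall_notMem_le [AddCommMonoid N] [LinearOrder N]
    [IsOrderedCancelAddMonoid N] {s t : Finset ι} {f : ι → N} (hcard : #t ≤ #s)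
    (hnonneg : ∀ i ∈ s, 0 ≤ f i) (htop : ∀ i ∈ s, ∀ j ∉ s, f j ≤ f i) :
    ∑ i ∈ t, f i ≤ ∑ i ∈ s, f i := by
  classical
  rw [← sum_sdiff_le_sum_sdiff]
  have hcard_sdiff : #(t \ s) ≤ #(s \ t) := card_sdiff_le_card_sdiff_iff.2 hcard
  rcases (s \ t).eq_empty_or_nonempty with hempty | hne
  · have hempty' : t \ s = ∅ := by simpa [hempty] using hcard_sdiff
    simp [hempty, hempty']
  · obtain ⟨m, hm, hmin⟩ := exists_min_image (s \ t) f hne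
    have hms : m ∈ s := (mem_sdiff.1 hm).1
    calc ∑ i ∈ t \ s, f i
        ≤ #(t \ s) • f m := sum_le_card_nsmul _ _ _ fun j hj => htop m hms j (mem_sdiff.1 hj).2
      _ ≤ #(s \ t) • f m := nsmul_le_nsmul_left (hnonneg m hms) hcard_sdiff
      _ ≤ ∑ i ∈ s \ t, f i := card_nsmul_le_sum _ _ _ hmin

variable [Fintype ι] [DecidableEq ι]

lemma sum_ite_mem_eq_sum_sub_sum_sub [AddCommGroup N] (s : Finset ι) (f g : ι → N) :
    ∑ i, (if i ∈ s then f i else g i) = ∑ i, g i - ∑ i ∈ s, (g i - f i) := by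
  rw [← sum_ite_mem_eq s, ← sum_sub_distrib]
  exact sum_congr rfl fun i _ => by split_ifs <;> simp

lemma sum_ite_mem_le_sum_ite_mem [AddCommGroup N] [LinearOrder N] [IsOrderedAddMonoid N]
    {s t : Finset ι} {f g : ι → N} (hcard : #t ≤ #s) (hfg : ∀ i ∈ s, f i ≤ g i)
    (htop : ∀ i ∈ s, ∀ j ∉ s, g j - f j ≤ g i - f i) :
    ∑ i, (if i ∈ s then f i else g i) ≤ ∑ i, if i ∈ t then f i else g i := by
  simp only [sum_ite_mem_eq_sum_sub_sum_sub]
  exact sub_le_sub_left (sum_le_sum_of_card_le_of_forall_notMem_le hcard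
    (fun i hi => sub_nonneg.2 (hfg i hi)) htop) _

end Exchange

section Clip

/-- The nearest point to `t` in the interval `[-M, M]`, for `0 ≤ M`; when `M < 0` the interval is
empty and the value is `-M`. -/
def clip {R : Type*} [Neg R] [LinearOrder R] (M t : R) : R := max (-M) (min M t)

variable {R : Type*} [CommRing R] [LinearOrder R] [IsStrictOrderedRing R] {M s t x : R}

lemma clip_eq_ite (hM : 0 ≤ M) (t : R) :
    clip M t = if M < t then M else if t < -M then -M else t := by
  grind [clip]

lemma abs_clip_le (hM : 0 ≤ M) (t : R) : |clip M t| ≤ M := by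
  grind [clip, abs_le]

lemma abs_clip_sub (hM : 0 ≤ M) (t : R) : |clip M t - t| = (|t| - M)⁺ := by
  grind [clip, posPart_def, abs_eq_max_neg]

lemma abs_clip_sub_le (hx : |x| ≤ M) (t : R) : |clip M t - t| ≤ |x - t| := by
  rw [abs_clip_sub ((abs_nonneg x).trans hx), posPart_def]
  refine max_le ?_ (abs_nonneg _)
  calc |t| - M ≤ |t| - |x| := sub_le_sub_left hx _
    _ ≤ |t - x| := abs_sub_abs_le_abs_sub t x
    _ = |x - t| := abs_sub_comm t x

lemma sq_sub_sq_clip_sub (hM : 0 ≤ M) (t : R) :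
    t ^ 2 - (clip M t - t) ^ 2 = (|t| + (|t| - M)⁺) * min |t| M := by
  have hmin : |t| - (|t| - M)⁺ = min |t| M := by grind [posPart_def]
  rw [← sq_abs t, ← sq_abs (clip M t - t), abs_clip_sub hM, sq_sub_sq, hmin]

lemma sq_sub_sq_clip_sub_le_of_abs_le (hM : 0 ≤ M) (hst : |s| ≤ |t|) :
    s ^ 2 - (clip M s - s) ^ 2 ≤ t ^ 2 - (clip M t - t) ^ 2 := by
  rw [sq_sub_sq_clip_sub hM, sq_sub_sq_clip_sub hM]
  have hpos : (|s| - M)⁺ ≤ (|t| - M)⁺ := posPart_mono (sub_le_sub_right hst M)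
  exact mul_le_mul (add_le_add hst hpos) (min_le_min_right M hst) (le_min (abs_nonneg s) hM)
    (add_nonneg (abs_nonneg t) (posPart_nonneg _))

end Clip

section Projection

/-- The constraint set `C` of vectors with at most `k` nonzero entries, all of absolute value at
most `M`. The sup-norm bound is stated entrywise because the norm of `EuclideanSpace` is the
Euclidean one. -/
def sparseBox (ι : Type*) [Fintype ι] (k : ℕ) (M : ℝ) : Set (EuclideanSpace ℝ ι) :=
  {x | #{i | x i ≠ 0} ≤ k ∧ ∀ i, |x i| ≤ M}

/-- The vector obtained from `z` by clipping the entries in `I` to `[-M, M]` and setting the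
others to zero: the candidate projection onto `sparseBox ι #I M`. -/
noncomputable def clipOn {ι : Type*} [DecidableEq ι] (M : ℝ) (I : Finset ι)
    (z : EuclideanSpace ℝ ι) : EuclideanSpace ℝ ι :=
  WithLp.toLp 2 fun i => if i ∈ I then clip M (z i) else 0

variable {ι : Type*} [Fintype ι] [DecidableEq ι] {M : ℝ} {I : Finset ι} {x : EuclideanSpace ℝ ι}

lemma clipOn_mem_sparseBox (hM : 0 ≤ M) (I : Finset ι) (z : EuclideanSpace ℝ ι) :
    clipOn M I z ∈ sparseBox ι #I M := by
  refine ⟨card_le_card fun i hi => ?_, fun i => ?_⟩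
  · by_contra hiI
    simp [clipOn, hiI] at hi
  · by_cases hi : i ∈ I <;> simp [clipOn, hi, abs_clip_le hM, hM]

lemma norm_clipOn_sub_sq (M : ℝ) (I : Finset ι) (z : EuclideanSpace ℝ ι) :
    ‖clipOn M I z - z‖ ^ 2 = ∑ i, if i ∈ I then (clip M (z i) - z i) ^ 2 else z i ^ 2 := by
  rw [EuclideanSpace.real_norm_sq_eq]
  exact sum_congr rfl fun i _ => by by_cases hi : i ∈ I <;> simp [clipOn, hi]

lemma norm_clipOn_support_sub_le (hx : ∀ i, |x i| ≤ M) (z : EuclideanSpace ℝ ι) :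
    ‖clipOn M {i | x i ≠ 0} z - z‖ ≤ ‖x - z‖ := by
  rw [← sq_le_sq₀ (norm_nonneg _) (norm_nonneg _), norm_clipOn_sub_sq,
    EuclideanSpace.real_norm_sq_eq]
  refine sum_le_sum fun i _ => ?_
  by_cases hxi : x i = 0
  · simp [hxi]
  · simpa [hxi] using sq_le_sq.2 (abs_clip_sub_le (hx i) (z i))

lemma norm_clipOn_sub_le_of_card_le (hM : 0 ≤ M) {J : Finset ι} {z : EuclideanSpace ℝ ι}
    (hcard : #J ≤ #I) (hbig : ∀ i ∈ I, ∀ j ∉ I, |z j| ≤ |z i|) :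
    ‖clipOn M I z - z‖ ≤ ‖clipOn M J z - z‖ := by
  rw [← sq_le_sq₀ (norm_nonneg _) (norm_nonneg _), norm_clipOn_sub_sq, norm_clipOn_sub_sq]
  have hclip (i : ι) : (clip M (z i) - z i) ^ 2 ≤ z i ^ 2 := by
    have hzero : |(0 : ℝ)| ≤ M := by rwa [abs_zero]
    simpa using sq_le_sq.2 (abs_clip_sub_le hzero (z i))
  exact sum_ite_mem_le_sum_ite_mem hcard (fun i _ => hclip i)
    fun i hi j hj => sq_sub_sq_clip_sub_le_of_abs_le hM (hbig i hi j hj)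

lemma norm_clipOn_sub_le_of_mem_sparseBox (hM : 0 ≤ M) {z : EuclideanSpace ℝ ι}
    (hbig : ∀ i ∈ I, ∀ j ∉ I, |z j| ≤ |z i|) (hx : x ∈ sparseBox ι #I M) :
    ‖clipOn M I z - z‖ ≤ ‖x - z‖ :=
  (norm_clipOn_sub_le_of_card_le hM hx.1 hbig).trans (norm_clipOn_support_sub_le hx.2 z)

end Projection

/-- Euclidean projection onto the set of `k`-sparse vectors with sup norm at most `M`:
keep the `k` largest-magnitude entries (clipped to `[-M, M]`) and zero out the rest. -/
theorem stmt1 (n k : ℕ) (hn : 0 < n) (hk : 0 < k) (hkn : k ≤ n) (M : ℝ) (hM : 0 < M)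
    (z : EuclideanSpace ℝ (Fin n)) (I : Finset (Fin n)) (hIcard : I.card = k)
    (hbig : ∀ i ∈ I, ∀ j ∉ I, |z j| ≤ |z i|)
    (p : EuclideanSpace ℝ (Fin n))
    (hp : ∀ i, p i =
      if i ∈ I then (if M < z i then M else if z i < -M then -M else z i) else 0) :
    ((Finset.univ.filter fun i => p i ≠ 0).card ≤ k ∧ ∀ i, |p i| ≤ M) ∧
      ∀ x : EuclideanSpace ℝ (Fin n),
        ((Finset.univ.filter fun i => x i ≠ 0).card ≤ k ∧ ∀ i, |x i| ≤ M) →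
          ‖p - z‖ ≤ ‖x - z‖ := by
  have hp_eq : p = clipOn M I z := by
    ext i
    simp only [hp, clipOn, clip_eq_ite hM.le]
  subst hIcard hp_eq
  exact ⟨clipOn_mem_sparseBox hM.le I z,
    fun x hx => norm_clipOn_sub_le_of_mem_sparseBox hM.le hbig hx⟩
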